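/- Let (P_A)_{A ⊊ N} be an equimarginal family of probability distributions on the proper subsets of N = {1,…,n}, and define Q = Σ_{B ⊊ N} (−1)^{n−|B|−1} 2^{|B|−n} P_B (with P_∅ ≡ the constant function 1). Then the P_A are the marginals of a single probability distribution P on {0,1}^n if and only if: (i) −2^{−n} ≤ Q(x) ≤ 1 − 2^{−n} for all x ∈ {0,1}^n, and (ii) for every subset A ⊆ N with an odd number of elements and all x ∈ {0,1}^n, 0 ≤ Q(x) + (κ_A Q)(x) ≤ 2. -/

import Mathlib

/-- Flip the coordinates of `x ∈ {0,1}ⁿ` indexed by `A`. -/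
def flipOn {n : ℕ} (A : Finset (Fin n)) (x : Fin n → Bool) : Fin n → Bool :=
  fun i => if i ∈ A then !(x i) else x i

/-- The bit-flip operator `κ_A`, the composite of the `κ_i` over `i ∈ A`:
`(κ_A f)(x) = f(x with coordinates in A flipped)`. -/
def kop {n : ℕ} (A : Finset (Fin n)) (f : (Fin n → Bool) → ℝ) : (Fin n → Bool) → ℝ :=
  fun x => f (flipOn A x)

/-- The operator `M_A`, the composite of the commuting operators
`(M_i f)(x) = f(x) + f(x with i-th coordinate flipped)` over `i ∈ A`;
equivalently `(M_A f)(x) = Σ_{B ⊆ A} f(x with coordinates in B flipped)`. -/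
def Mop {n : ℕ} (A : Finset (Fin n)) (f : (Fin n → Bool) → ℝ) : (Fin n → Bool) → ℝ :=
  fun x => ∑ B ∈ A.powerset, f (flipOn B x)

/-- A probability distribution on the subset `A ⊆ N` of the binary variables:
a nonnegative function on `{0,1}ⁿ`, constant in the coordinates outside `A`,
with `M_A P_A` the constant function 1. -/
def IsDistOn {n : ℕ} (A : Finset (Fin n)) (f : (Fin n → Bool) → ℝ) : Prop :=
  (∀ x, 0 ≤ f x) ∧ (∀ i, i ∉ A → kop {i} f = f) ∧ Mop A f = fun _ => (1 : ℝ)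

/-- A family `(P_A)_{A ⊊ N}` of distributions on the proper subsets of `N` is
equimarginal if `M_{B∖A} P_B = M_{C∖A} P_C` whenever `A ⊆ B ∩ C` with `B, C ⊊ N`. -/
def Equimarginal {n : ℕ} (P : Finset (Fin n) → (Fin n → Bool) → ℝ) : Prop :=
  ∀ A B C : Finset (Fin n), B ⊂ Finset.univ → C ⊂ Finset.univ → A ⊆ B → A ⊆ C →
    Mop (B \ A) (P B) = Mop (C \ A) (P C)

/-- The sign function `σ_A(x) = Π_{i∈A} (-1)^{x_i}`. -/
def sigmaFn {n : ℕ} (A : Finset (Fin n)) (x : Fin n → Bool) : ℝ :=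
  ∏ i ∈ A, (if x i then (-1 : ℝ) else 1)

lemma flipOn_empty' {n : ℕ} (x : Fin n → Bool) : flipOn ∅ x = x := by
  funext i; simp [flipOn]

lemma flipOn_insert' {n : ℕ} (B : Finset (Fin n)) (i : Fin n) (hi : i ∉ B) (x : Fin n → Bool) :
    flipOn (insert i B) x = flipOn {i} (flipOn B x) := by
  funext j
  by_cases h : j = i
  · subst h; simp [flipOn, hi]
  · simp [flipOn, h]

lemma flipOn_symmDiff' {n : ℕ} (C A : Finset (Fin n)) (x : Fin n → Bool) :
    flipOn (symmDiff C A) x = flipOn C (flipOn A x) := by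
  funext j
  by_cases h : j ∈ C <;> by_cases h' : j ∈ A <;> simp [flipOn, Finset.mem_symmDiff, h, h']

lemma Mop_empty' {n : ℕ} (f : (Fin n → Bool) → ℝ) : Mop ∅ f = f := by
  funext x; simp [Mop, flipOn_empty']

lemma Mop_single' {n : ℕ} (i : Fin n) (f : (Fin n → Bool) → ℝ) (x : Fin n → Bool) :
    Mop {i} f x = f x + f (flipOn {i} x) := by
  have h : ({i} : Finset (Fin n)) = insert i ∅ := by simp
  unfold Mop
  conv_lhs => rw [h]
  rw [Finset.sum_powerset_insert (by simp)]
  simp [flipOn_empty']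

lemma Mop_insert' {n : ℕ} (S : Finset (Fin n)) (i : Fin n) (hi : i ∉ S)
    (f : (Fin n → Bool) → ℝ) : Mop (insert i S) f = Mop S (Mop {i} f) := by
  funext x
  have h1 : Mop S (Mop {i} f) x = ∑ B ∈ S.powerset, Mop {i} f (flipOn B x) := rfl
  rw [h1]
  simp only [Mop_single']
  rw [Finset.sum_add_distrib]
  unfold Mop
  rw [Finset.sum_powerset_insert hi]
  congr 1
  apply Finset.sum_congr rfl
  intro B hB
  rw [flipOn_insert' B i (fun h => hi (Finset.mem_powerset.1 hB h))]

lemma sigma_flip' {n : ℕ} (A : Finset (Fin n)) (x : Fin n → Bool) :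
    sigmaFn Finset.univ (flipOn A x) = (-1) ^ A.card * sigmaFn Finset.univ x := by
  unfold sigmaFn
  have h : ((-1 : ℝ)) ^ A.card = ∏ i : Fin n, (if i ∈ A then (-1 : ℝ) else 1) := by
    rw [Finset.prod_ite_mem]; simp
  rw [h, ← Finset.prod_mul_distrib]
  apply Finset.prod_congr rfl
  intro i _
  by_cases h : i ∈ A <;> cases hx : x i <;> simp [flipOn, h, hx]

lemma sigma_cases' {n : ℕ} (x : Fin n → Bool) :
    sigmaFn Finset.univ x = 1 ∨ sigmaFn Finset.univ x = -1 := by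
  unfold sigmaFn
  induction (Finset.univ : Finset (Fin n)) using Finset.induction_on with
  | empty => simp
  | insert a s ha ih =>
    rw [Finset.prod_insert ha]
    rcases ih with h | h <;> rw [h] <;> cases x a <;> simp

lemma exists_flip' {n : ℕ} (x y : Fin n → Bool) : ∃ A, flipOn A x = y := by
  refine ⟨Finset.univ.filter (fun i => x i ≠ y i), ?_⟩
  funext i
  cases hx : x i <;> cases hy : y i <;> simp [flipOn, hx, hy]

lemma sum_flip' {n : ℕ} (A : Finset (Fin n)) (g : (Fin n → Bool) → ℝ) (x : Fin n → Bool) :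
    ∑ C : Finset (Fin n), g (flipOn C (flipOn A x)) = ∑ C : Finset (Fin n), g (flipOn C x) := by
  have hinv : Function.Involutive (fun C : Finset (Fin n) => symmDiff C A) := by
    intro C; simp
  rw [← Equiv.sum_comp hinv.toPerm (fun C => g (flipOn C x))]
  apply Finset.sum_congr rfl
  intro C _
  simp [flipOn_symmDiff']

noncomputable def altT {n : ℕ} (R : (Fin n → Bool) → ℝ) (x : Fin n → Bool) : ℝ :=
  ∑ C : Finset (Fin n), (-1 : ℝ) ^ C.card * R (flipOn C x)

lemma altT_eq' {n : ℕ} (R : (Fin n → Bool) → ℝ) (x : Fin n → Bool) :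
    altT R x = sigmaFn Finset.univ x *
      ∑ C : Finset (Fin n), sigmaFn Finset.univ (flipOn C x) * R (flipOn C x) := by
  unfold altT
  rw [Finset.mul_sum]
  apply Finset.sum_congr rfl
  intro C _
  rw [sigma_flip']
  rcases sigma_cases' x with h | h <;> rw [h] <;> ring

lemma altT_flip' {n : ℕ} (R : (Fin n → Bool) → ℝ) (A : Finset (Fin n)) (hA : Odd A.card)
    (x : Fin n → Bool) : altT R (flipOn A x) = - altT R x := by
  rw [altT_eq', altT_eq', sum_flip' A (fun y => sigmaFn Finset.univ y * R y), sigma_flip',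
    hA.neg_one_pow]
  ring

lemma inner' {n : ℕ} (D : Finset (Fin n)) :
    ∑ C ∈ Finset.univ.filter (fun C => D ⊆ C), (-1 : ℝ) ^ C.card * 2 ^ (n - C.card)
      = (-1) ^ D.card := by
  have h2 : ∑ C ∈ Finset.univ.filter (fun C => D ⊆ C), (-1 : ℝ) ^ C.card * 2 ^ (n - C.card)
      = ∑ E ∈ Dᶜ.powerset, (-1 : ℝ) ^ D.card * ((-1) ^ E.card * 2 ^ (Dᶜ.card - E.card)) := by
    symm
    apply Finset.sum_bij' (fun E _ => D ∪ E) (fun C _ => C \ D)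
    · intro E _; simp
    · intro C _
      simp only [Finset.mem_powerset]
      intro j hj; simp at hj ⊢; exact hj.2
    · intro E hE
      rw [Finset.union_sdiff_cancel_left]
      exact Finset.disjoint_left.2 fun j hj hj' => by
        have := Finset.mem_powerset.1 hE hj'; simp at this; exact this hj
    · intro C hC
      simp at hC
      exact Finset.union_sdiff_of_subset hC
    · intro E hE
      have hd : Disjoint D E := Finset.disjoint_left.2 fun j hj hj' => by
        have := Finset.mem_powerset.1 hE hj'; simp at this; exact this hj
      rw [Finset.card_union_of_disjoint hd, Finset.card_compl, Fintype.card_fin, pow_add,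
        Nat.sub_add_eq]
      ring
  rw [h2, ← Finset.mul_sum, Finset.sum_pow_mul_eq_add_pow]
  norm_num

lemma altT_Mop' {n : ℕ} (R : (Fin n → Bool) → ℝ) (x : Fin n → Bool) :
    ∑ C : Finset (Fin n), (-1 : ℝ) ^ C.card * 2 ^ (n - C.card) * Mop C R x = altT R x := by
  unfold altT Mop
  simp_rw [Finset.mul_sum]
  rw [Finset.sum_comm' (t' := Finset.univ) (s' := fun D => Finset.univ.filter (fun C => D ⊆ C))
    (by intro C D; simp)]
  apply Finset.sum_congr rfl
  intro D _
  rw [← Finset.sum_mul, inner']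

lemma Q_forward' {n : ℕ} (P : Finset (Fin n) → (Fin n → Bool) → ℝ) (R : (Fin n → Bool) → ℝ)
    (hR : ∀ A : Finset (Fin n), A ⊂ Finset.univ → Mop (Finset.univ \ A) R = P A)
    (x : Fin n → Bool) :
    ∑ B ∈ Finset.univ.filter (fun B : Finset (Fin n) => B ⊂ Finset.univ),
        (-1 : ℝ) ^ (n - B.card - 1) * (2 ^ B.card / 2 ^ n) * P B x
      = R x - altT R x / 2 ^ n := by
  have h1 : altT R x = ∑ B : Finset (Fin n),
      (-1 : ℝ) ^ (n - B.card) * 2 ^ B.card * Mop (Finset.univ \ B) R x := by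
    rw [← altT_Mop']
    have hinv : Function.Involutive (fun C : Finset (Fin n) => Cᶜ) := fun C => compl_compl C
    rw [← Equiv.sum_comp hinv.toPerm]
    apply Finset.sum_congr rfl
    intro B _
    have hB : B.card ≤ n := by simpa using Finset.card_le_univ B
    simp only [Function.Involutive.coe_toPerm, Finset.card_compl, Fintype.card_fin]
    rw [Nat.sub_sub_self hB, ← Finset.compl_eq_univ_sdiff]
  have h2 : (Finset.univ.filter (fun B : Finset (Fin n) => B ⊂ Finset.univ))
      = Finset.univ.erase Finset.univ := by
    ext B; simp [Finset.ssubset_univ_iff]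
  rw [← Finset.add_sum_erase _ _ (Finset.mem_univ Finset.univ)] at h1
  rw [h1, ← h2, add_div, Finset.sum_div]
  simp only [Finset.card_univ, Fintype.card_fin, Nat.sub_self, sdiff_self, pow_zero, one_mul]
  have h3 : Mop (⊥ : Finset (Fin n)) R x = R x := by
    rw [Finset.bot_eq_empty, Mop_empty']
  rw [h3, mul_div_cancel_left₀ _ (by positivity), sub_add_cancel_left, ← Finset.sum_neg_distrib]
  apply Finset.sum_congr rfl
  intro B hB
  simp only [Finset.mem_filter, Finset.mem_univ, true_and] at hB
  have hc : B.card < n := by simpa using Finset.card_lt_card hB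
  obtain ⟨k, hk⟩ : ∃ k, n - B.card = k + 1 := ⟨n - B.card - 1, by omega⟩
  rw [hR B hB, hk, Nat.add_sub_cancel, pow_succ]
  ring

lemma Q_back' {n : ℕ} (P : Finset (Fin n) → (Fin n → Bool) → ℝ)
    (hdist : ∀ A : Finset (Fin n), A ⊂ Finset.univ → IsDistOn A (P A))
    (hequi : Equimarginal P)
    (Q : (Fin n → Bool) → ℝ)
    (hQ : ∀ x, Q x = ∑ B ∈ Finset.univ.filter (fun B : Finset (Fin n) => B ⊂ Finset.univ),
        (-1 : ℝ) ^ (n - B.card - 1) * (2 ^ B.card / 2 ^ n) * P B x) (i : Fin n) :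
    Mop {i} Q = P (Finset.univ.erase i) := by
  funext x
  have hss : Finset.univ.erase i ⊂ (Finset.univ : Finset (Fin n)) :=
    Finset.erase_ssubset (Finset.mem_univ i)
  have hM : Mop {i} Q x = ∑ B : Finset (Fin n), if B ⊂ Finset.univ then
      (-1 : ℝ) ^ (n - B.card - 1) * (2 ^ B.card / 2 ^ n) * Mop {i} (P B) x else 0 := by
    rw [Mop_single', hQ, hQ, ← Finset.sum_add_distrib, Finset.sum_filter]
    apply Finset.sum_congr rfl
    intro B _
    rw [Mop_single', mul_add]
  have hu : (Finset.univ : Finset (Finset (Fin n)))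
      = (insert i (Finset.univ.erase i)).powerset := by
    rw [Finset.insert_erase (Finset.mem_univ i), Finset.powerset_univ]
  rw [hM, hu, Finset.sum_powerset_insert (by simp), ← Finset.sum_add_distrib,
    Finset.sum_eq_single (Finset.univ.erase i)]
  · rw [if_pos hss, if_neg (by rw [Finset.insert_erase (Finset.mem_univ i)]; exact fun h => h.ne rfl)]
    have hk := (hdist _ hss).2.1 i (by simp)
    have hk2 : P (Finset.univ.erase i) (flipOn {i} x) = P (Finset.univ.erase i) x := congrFun hk x
    rw [Mop_single', hk2, Finset.card_erase_of_mem (Finset.mem_univ i), Finset.card_univ,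
      Fintype.card_fin]
    obtain ⟨k, rfl⟩ : ∃ k, n = k + 1 := ⟨n - 1, by have := i.pos; omega⟩
    simp only [Nat.add_sub_cancel, Nat.add_sub_cancel_left, Nat.sub_self, pow_zero, pow_succ]
    field_simp
    ring
  · intro B hB hne
    rw [Finset.mem_powerset] at hB
    have hiB : i ∉ B := fun h => by simpa using hB h
    have hB1 : B ⊂ Finset.univ := lt_of_le_of_lt hB hss
    have hB2 : insert i B ⊂ Finset.univ := by
      rw [Finset.ssubset_univ_iff]
      intro h
      apply hne
      rw [← h, Finset.erase_insert hiB]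
    have hc : (insert i B).card < n := by simpa using Finset.card_lt_card hB2
    have hk2 : P B (flipOn {i} x) = P B x := congrFun ((hdist _ hB1).2.1 i hiB) x
    have he := hequi B (insert i B) B hB2 hB1 (Finset.subset_insert i B) (Finset.Subset.refl B)
    have hd : insert i B \ B = {i} := by
      ext j; simp only [Finset.mem_sdiff, Finset.mem_insert, Finset.mem_singleton]
      constructor
      · rintro ⟨h | h, h'⟩
        · exact h
        · exact absurd h h'
      · rintro rfl; exact ⟨Or.inl rfl, hiB⟩
    rw [hd, Finset.sdiff_self, Mop_empty'] at he
    rw [if_pos hB1, if_pos hB2, he, Mop_single', hk2]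
    rw [Finset.card_insert_of_notMem hiB] at hc ⊢
    obtain ⟨k, hk⟩ : ∃ k, n - B.card - 1 = k + 1 := ⟨n - B.card - 2, by omega⟩
    have hk' : n - (B.card + 1) - 1 = k := by omega
    rw [hk, hk', pow_succ, pow_succ]
    ring
  · intro h; simp at h

/-- Theorem 3 of the paper.  Let `(P_A)_{A ⊊ N}` be an equimarginal
family of probability distributions on the proper subsets of `N = {1,…,n}` and let
`Q = Σ_{B ⊊ N} (-1)^{n-|B|-1} 2^{|B|-n} P_B`.  The `P_A` are the marginals of a single
probability distribution on `{0,1}ⁿ` if and only if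
(i) `-2⁻ⁿ ≤ Q(x) ≤ 1 - 2⁻ⁿ` for all `x`, and
(ii) `0 ≤ Q(x) + (κ_A Q)(x) ≤ 2` for every odd subset `A ⊆ N` and all `x`. -/
theorem stmt_9 (n : ℕ) (P : Finset (Fin n) → (Fin n → Bool) → ℝ)
    (hdist : ∀ A : Finset (Fin n), A ⊂ Finset.univ → IsDistOn A (P A))
    (hequi : Equimarginal P)
    (Q : (Fin n → Bool) → ℝ)
    (hQ : ∀ x, Q x = ∑ B ∈ Finset.univ.filter (fun B : Finset (Fin n) => B ⊂ Finset.univ),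
        (-1 : ℝ) ^ (n - B.card - 1) * (2 ^ B.card / 2 ^ n) * P B x) :
    (∃ R : (Fin n → Bool) → ℝ, IsDistOn Finset.univ R ∧
        ∀ A : Finset (Fin n), A ⊂ Finset.univ → Mop (Finset.univ \ A) R = P A) ↔
      ((∀ x, -(1 / 2 ^ n) ≤ Q x ∧ Q x ≤ 1 - 1 / 2 ^ n) ∧
       (∀ A : Finset (Fin n), Odd A.card → ∀ x,
          0 ≤ Q x + kop A Q x ∧ Q x + kop A Q x ≤ 2)) := by
  constructor
  · rintro ⟨R, ⟨hpos, -, hone⟩, hR⟩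
    have hQR : ∀ x, Q x = R x - altT R x / 2 ^ n := fun x => by
      rw [hQ, Q_forward' P R hR]
    have hsum : ∀ x, ∑ C : Finset (Fin n), R (flipOn C x) = 1 := fun x => by
      have := congrFun hone x
      simpa [Mop] using this
    have hle : ∀ x, R x ≤ 1 := fun x => by
      rw [← hsum x]
      have := Finset.single_le_sum (f := fun C : Finset (Fin n) => R (flipOn C x))
        (fun C _ => hpos _) (Finset.mem_univ ∅)
      simpa [flipOn_empty'] using this
    have hT1 : ∀ x, altT R x ≤ 1 := fun x => by
      rw [← hsum x]
      apply Finset.sum_le_sum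
      intro C _
      have := hpos (flipOn C x)
      rcases neg_one_pow_eq_or ℝ C.card with h | h <;> rw [h] <;> linarith
    have hT2 : ∀ x, 2 * R x - 1 ≤ altT R x := fun x => by
      have h := Finset.single_le_sum
        (f := fun C : Finset (Fin n) => (-1 : ℝ) ^ C.card * R (flipOn C x) + R (flipOn C x))
        (fun C _ => by
          have := hpos (flipOn C x)
          rcases neg_one_pow_eq_or ℝ C.card with h | h <;> simp only [h] <;> linarith)
        (Finset.mem_univ ∅)
      rw [Finset.sum_add_distrib, hsum] at h
      simp only [Finset.card_empty, pow_zero, flipOn_empty'] at h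
      unfold altT
      linarith
    refine ⟨fun x => ⟨?_, ?_⟩, fun A hA x => ?_⟩
    · have h1 : altT R x / 2 ^ n ≤ 1 / 2 ^ n := by gcongr; exact hT1 x
      rw [hQR]
      linarith [hpos x]
    · rcases Nat.eq_zero_or_pos n with h0 | h0
      · subst h0
        rw [hQ]
        simp [Finset.filter_eq_empty_iff, Finset.ssubset_univ_iff, Finset.eq_empty_of_isEmpty,
          Finset.univ_eq_empty]
      · have h1 : (2 * R x - 1) / 2 ^ n ≤ altT R x / 2 ^ n := by gcongr; exact hT2 x
        have h2 : (1 : ℝ) / 2 ^ n ≤ 1 / 2 := by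
          apply one_div_le_one_div_of_le (by norm_num)
          calc (2 : ℝ) = 2 ^ 1 := by norm_num
            _ ≤ 2 ^ n := pow_le_pow_right₀ (by norm_num) h0
        rw [hQR]
        have h3 : (2 * R x - 1) / 2 ^ n = (2 * R x - 1) * (1 / 2 ^ n) := by ring
        rw [h3] at h1
        nlinarith [hle x, hpos x]
    · have : Q x + kop A Q x = R x + R (flipOn A x) := by
        unfold kop
        rw [hQR, hQR, altT_flip' R A hA]; ring
      rw [this]
      constructor <;> linarith [hpos x, hpos (flipOn A x), hle x, hle (flipOn A x)]
  · rintro ⟨-, h2⟩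
    rcases Nat.eq_zero_or_pos n with h0 | h0
    · subst h0
      refine ⟨fun _ => 1, ⟨fun _ => by norm_num, fun i => i.elim0, ?_⟩, ?_⟩
      · funext x; simp [Mop]
      · intro A hA
        exact absurd (Finset.eq_empty_of_isEmpty A) (fun h => by simp [h] at hA)
    · obtain ⟨x0, hx0, hmin⟩ := Finset.exists_min_image
        (Finset.univ.filter (fun x : Fin n → Bool => sigmaFn Finset.univ x = 1)) Q
        ⟨fun _ => false, Finset.mem_filter.2 ⟨Finset.mem_univ _, by simp [sigmaFn]⟩⟩
      simp only [Finset.mem_filter, Finset.mem_univ, true_and] at hx0 hmin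
      have hmarg : ∀ A : Finset (Fin n), A ⊂ Finset.univ →
          Mop (Finset.univ \ A) (fun x => Q x + -Q x0 * sigmaFn Finset.univ x) = P A := by
        intro A hA
        obtain ⟨i, -, hi⟩ := Finset.exists_of_ssubset hA
        have hss : Finset.univ.erase i ⊂ (Finset.univ : Finset (Fin n)) :=
          Finset.erase_ssubset (Finset.mem_univ i)
        have hs : Finset.univ \ A = insert i (Finset.univ.erase i \ A) := by
          ext j
          by_cases hj : j = i
          · subst hj; simp [hi]
          · simp [hj]
        have hM : Mop {i} (fun x => Q x + -Q x0 * sigmaFn Finset.univ x)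
            = P (Finset.univ.erase i) := by
          rw [← Q_back' P hdist hequi Q hQ i]
          funext x
          rw [Mop_single', Mop_single', sigma_flip']
          simp
          ring
        rw [hs, Mop_insert' _ _ (by simp), hM,
          hequi A (Finset.univ.erase i) A hss hA
            (fun j hj => by
              simp only [Finset.mem_erase, Finset.mem_univ, and_true]
              rintro rfl; exact hi hj) (Finset.Subset.refl A),
          Finset.sdiff_self, Mop_empty']
      refine ⟨fun x => Q x + -Q x0 * sigmaFn Finset.univ x, ⟨?_, ?_, ?_⟩, hmarg⟩
      · intro x
        show 0 ≤ Q x + -Q x0 * sigmaFn Finset.univ x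
        rcases sigma_cases' x with h | h
        · rw [h]; linarith [hmin x h]
        · obtain ⟨A, hA⟩ := exists_flip' x0 x
          have hodd : Odd A.card := by
            rw [← Nat.not_even_iff_odd]
            intro he
            have := sigma_flip' A x0
            rw [hA, h, hx0, he.neg_one_pow] at this
            norm_num at this
          have := (h2 A hodd x0).1
          unfold kop at this
          rw [hA] at this
          rw [h]; linarith
      · intro i hi; exact absurd (Finset.mem_univ i) hi
      · have he : (∅ : Finset (Fin n)) ⊂ Finset.univ := by
          rw [Finset.ssubset_univ_iff]
          intro h
          have := Finset.mem_univ (⟨0, h0⟩ : Fin n)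
          rw [← h] at this
          simp at this
        have h1 := hmarg ∅ he
        rw [Finset.sdiff_empty] at h1
        rw [h1]
        have := (hdist ∅ he).2.2
        rwa [Mop_empty'] at this
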